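/- Let G be a finite undirected graph with positive edge weights and unique shortest paths between all pairs of vertices, with uniqueness also holding in G∖{e₁}. Let e₁ = {a,b} lie on the unique shortest s–t path with a nearer to s, and let e₂ = {c,d} lie on the unique shortest s–t path in G∖{e₁} with c nearer to s. Let p be a vertex on a shortest s–t path P in G∖{e₁,e₂}. Then: (i) if e₁ lies on the unique shortest p–t path in G, the endpoint a is nearer to p than b on that path; and (ii) if e₂ lies on the unique shortest p–t path in G∖{e₁}, the endpoint c is nearer to p than d on that path. -/

import Mathlib

/-! All paths in question end at the same target `t`, and on shortest paths to `t` an edge can only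
be traversed towards `t`. Indeed, if one shortest path to `t` traverses `{a, b}` as `a → b` and
another as `b → a`, exchanging their tails (the first skipping from `a` to the other's tail at `a`,
the second from `b` to the first's tail at `b`) saves the weight of the edge in each case:
`w(a, b) + dist(b, t) ≤ dist(a, t)` and `w(a, b) + dist(a, t) ≤ dist(b, t)`, which contradicts
`0 < w(a, b)`. This is `traverses_of_mem_edges`; it gives part (i) in `G` with the primary path
and part (ii) in `G ∖ {e₁}` with the secondary path. -/


open SimpleGraph

namespace FaultyOracle

variable {V : Type*}

/-- The weight of a walk: the sum of the weights of its edges. -/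
def wht (w : Sym2 V → ℝ) {G : SimpleGraph V} {u v : V} (p : G.Walk u v) : ℝ :=
  (p.edges.map w).sum

/-- A walk is a shortest path (w.r.t. the edge weights `w`): it is a path and its weight
is at most the weight of every walk with the same endpoints. -/
def IsShortest (w : Sym2 V → ℝ) {G : SimpleGraph V} {u v : V} (p : G.Walk u v) : Prop :=
  p.IsPath ∧ ∀ q : G.Walk u v, wht w p ≤ wht w q

/-- Shortest paths in `G` (w.r.t. `w`) are unique. -/
def UniqueShortest (G : SimpleGraph V) (w : Sym2 V → ℝ) : Prop :=
  ∀ ⦃u v : V⦄ (p q : G.Walk u v), IsShortest w p → IsShortest w q → p = q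

/-- `u` lies in the subtree `T_s(x)` of `x` in the shortest-path tree rooted at `s`:
some (= the unique) shortest `s`–`u` path passes through `x`. -/
def InSubtree (G : SimpleGraph V) (w : Sym2 V → ℝ) (s x u : V) : Prop :=
  ∃ p : G.Walk s u, IsShortest w p ∧ x ∈ p.support

/-- A walk is intact from a set `fends` of (fault-edge) endpoints: no vertex in `fends`
lies strictly between its endpoints. -/
def Intact {G : SimpleGraph V} {u v : V} (p : G.Walk u v) (fends : Set V) : Prop :=
  ∀ y ∈ fends, y ∈ p.support → y = u ∨ y = v

/-- `x` is `s`-clean from the set of fault endpoints `fends`: the (unique) shortest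
`s`–`x` path is intact from `fends`, and no vertex of `fends` lies in `T_s(x)`. -/
def SClean (G : SimpleGraph V) (w : Sym2 V → ℝ) (s x : V) (fends : Set V) : Prop :=
  (∀ p : G.Walk s x, IsShortest w p → Intact p fends) ∧
    ∀ y ∈ fends, ¬ InSubtree G w s x y

/-- The walk `p` traverses the edge `{a, b}` from `a` to `b` (so `a` is nearer to the
start of `p`). -/
def Traverses {G : SimpleGraph V} {u v : V} (p : G.Walk u v) (a b : V) : Prop :=
  ∃ (q : G.Walk u a) (hab : G.Adj a b) (r : G.Walk b v), p = q.append (Walk.cons hab r)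

/-- The detour of `P` (w.r.t. the primary path `Pst` and the secondary path `Psec`)
starts on the primary path: `P` has a prefix `Q`, all of whose edges lie on
`Pst ∪ Psec`, ending at a vertex `x` of the primary path, after which `P` immediately
deviates from `Pst ∪ Psec`. -/
def DetourStartsOnPrimary {G₁ G₂ H : SimpleGraph V} {s t : V} (P : H.Walk s t)
    (Pst : G₁.Walk s t) (Psec : G₂.Walk s t) : Prop :=
  ∃ (x : V) (Q : H.Walk s x) (R : H.Walk x t),
    P = Q.append R ∧
    (∀ e ∈ Q.edges, e ∈ Pst.edges ∨ e ∈ Psec.edges) ∧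
    x ∈ Pst.support ∧ ¬ R.Nil ∧
    (∀ e, R.edges.head? = some e → ¬(e ∈ Pst.edges ∨ e ∈ Psec.edges))

end FaultyOracle

open FaultyOracle

namespace FaultyOracle

variable {V : Type*}

theorem wht_append (w : Sym2 V → ℝ) {G : SimpleGraph V} {u v x : V}
    (p : G.Walk u v) (q : G.Walk v x) : wht w (p.append q) = wht w p + wht w q := by
  simp [wht]

theorem wht_cons (w : Sym2 V → ℝ) {G : SimpleGraph V} {u v x : V}
    (h : G.Adj u v) (q : G.Walk v x) : wht w (Walk.cons h q) = w s(u, v) + wht w q := by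
  simp [wht]

theorem traverses_or_of_mem_edges {G : SimpleGraph V} {u v a b : V} (p : G.Walk u v)
    (h : s(a, b) ∈ p.edges) : Traverses p a b ∨ Traverses p b a := by
  induction p with
  | nil => simp at h
  | cons hadj q ih =>
    rw [Walk.edges_cons, List.mem_cons] at h
    rcases h with h | h
    · rcases Sym2.eq_iff.1 h with ⟨rfl, rfl⟩ | ⟨rfl, rfl⟩
      · exact Or.inl ⟨Walk.nil, hadj, q, rfl⟩
      · exact Or.inr ⟨Walk.nil, hadj, q, rfl⟩
    · rcases ih h with ⟨q₁, hab, r, rfl⟩ | ⟨q₁, hab, r, rfl⟩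
      · exact Or.inl ⟨Walk.cons hadj q₁, hab, r, rfl⟩
      · exact Or.inr ⟨Walk.cons hadj q₁, hab, r, rfl⟩

/-- Two shortest walks with the same target traverse a common edge in the same direction,
whatever their sources. -/
theorem traverses_of_mem_edges {G : SimpleGraph V} (w : Sym2 V → ℝ)
    (hw : ∀ e ∈ G.edgeSet, 0 < w e) {s p t a b : V} {R : G.Walk s t} (hR : IsShortest w R)
    (hab : Traverses R a b) {Q : G.Walk p t} (hQ : IsShortest w Q) (h : s(a, b) ∈ Q.edges) :
    Traverses Q a b := by
  refine (traverses_or_of_mem_edges Q h).resolve_right ?_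
  rintro ⟨q₁, hba, r₁, rfl⟩
  obtain ⟨q₂, hab, r₂, rfl⟩ := hab
  -- Exchange the tails `r₁` (from `a`) and `r₂` (from `b`).
  have h₁ := hQ.2 (q₁.append r₂)
  have h₂ := hR.2 (q₂.append r₁)
  have hpos : 0 < w s(a, b) := hw _ hab
  simp only [wht_append, wht_cons] at h₁ h₂
  rw [Sym2.eq_swap] at h₁
  linarith

end FaultyOracle

open FaultyOracle

/-- Orientation of the faults is preserved along `P`: for a vertex `p` on
`P = st ⋄ {e₁, e₂}`, (i) if `e₁ = {a, b}` lies on the unique shortest `p`–`t` path of `G`,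
then it is traversed from `a` to `b` (`a` is nearer to `p`); (ii) if `e₂ = {c, d}` lies on
the unique shortest `p`–`t` path of `G ∖ {e₁}`, then it is traversed from `c` to `d`. -/
theorem fault_orientation_preserved
    {V : Type*} [Fintype V] [DecidableEq V] (G : SimpleGraph V) (w : Sym2 V → ℝ)
    (hw : ∀ e ∈ G.edgeSet, 0 < w e)
    (s t a b c d : V) (e₁ e₂ : Sym2 V)
    (he₁ : e₁ = s(a, b)) (he₂ : e₂ = s(c, d))
    (husp : UniqueShortest G w)
    (husp' : UniqueShortest (G.deleteEdges {e₁}) w)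
    -- the primary path, containing `e₁` traversed from `a` (nearer `s`) to `b`
    (Pst : G.Walk s t) (hPst : IsShortest w Pst) (hab : Traverses Pst a b)
    -- the secondary path, containing `e₂` traversed from `c` (nearer `s`) to `d`
    (Psec : (G.deleteEdges {e₁}).Walk s t) (hPsec : IsShortest w Psec)
    (hcd : Traverses Psec c d)
    -- `p` is a vertex on a shortest `s`–`t` path in `G ∖ {e₁, e₂}`
    (P : (G.deleteEdges {e₁, e₂}).Walk s t) (hP : IsShortest w P)
    (p : V) (hp : p ∈ P.support) :
    (∀ Q : G.Walk p t, IsShortest w Q → e₁ ∈ Q.edges → Traverses Q a b) ∧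
    (∀ Q : (G.deleteEdges {e₁}).Walk p t, IsShortest w Q → e₂ ∈ Q.edges →
      Traverses Q c d) := by
  subst he₁ he₂
  exact ⟨fun Q hQ h => traverses_of_mem_edges w hw hPst hab hQ h,
    fun Q hQ h => traverses_of_mem_edges w
      (fun e he => hw e (SimpleGraph.edgeSet_mono (deleteEdges_le _) he)) hPsec hcd hQ h⟩
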